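/- Let T be a triangulated category with a semiorthogonal decomposition T = ⟨T₁, T₂⟩, and let T₁^{≤0} and T₂^{≤0} be t-structures on T₁ and T₂ respectively that are compatible in T, so that T^{≤0} := T₂^{≤0} * (T₁^{≤0}[1]) is a t-structure on T. Then its right orthogonal satisfies T^{≥1} := (T^{≤0})^⊥ = T₂^{≥1} * (T₁^{≥1}[1]). -/

import Mathlib

open CategoryTheory Category Limits Pretriangulated

namespace Paper

universe v u

variable {C : Type u} [Category.{v} C] [HasZeroObject C] [Preadditive C]
  [HasShift C ℤ] [∀ n : ℤ, (shiftFunctor C n).Additive] [Pretriangulated C]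

/-- The right orthogonal of a set of objects: objects receiving only zero maps. -/
def rOrth (S : Set C) : Set C := {Y | ∀ X ∈ S, ∀ f : X ⟶ Y, f = 0}

/-- Shift of a set of objects by `n` (closed under isomorphism). -/
def shSet (S : Set C) (n : ℤ) : Set C := {Y | ∃ X ∈ S, Nonempty (Y ≅ X⟦n⟧)}

/-- The `*` operation on sets of objects of a triangulated category. -/
def star (X Y : Set C) : Set C :=
  {Z | ∃ (A : C) (_ : A ∈ X) (B : C) (_ : B ∈ Y) (f : A ⟶ Z) (g : Z ⟶ B)
    (h : B ⟶ A⟦(1 : ℤ)⟧), Triangle.mk f g h ∈ distTriang C}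

/-- A strictly full triangulated subcategory, encoded as a set of objects. -/
structure IsTriangulatedSub (S : Set C) : Prop where
  zero : ∀ X : C, IsZero X → X ∈ S
  isoClosed : ∀ {X Y : C}, (X ≅ Y) → X ∈ S → Y ∈ S
  shift : ∀ (n : ℤ), ∀ X ∈ S, X⟦n⟧ ∈ S
  ext₂ : ∀ T ∈ distTriang C, T.obj₁ ∈ S → T.obj₃ ∈ S → T.obj₂ ∈ S

/-- A t-structure on the full triangulated subcategory `S ⊆ C`, given by its aisle
`le` (playing the role of `S^{≤ 0}`).  The coaisle `S^{≥ 1}` is `S ∩ rOrth le`. -/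
structure IsTStructureOn (S le : Set C) : Prop where
  subset : le ⊆ S
  isoClosed : ∀ {X Y : C}, (X ≅ Y) → X ∈ le → Y ∈ le
  shift : ∀ X ∈ le, X⟦(1 : ℤ)⟧ ∈ le
  exists_triangle : ∀ E ∈ S, ∃ (A B : C) (_ : A ∈ le) (_ : B ∈ S ∩ rOrth le)
    (f : A ⟶ E) (g : E ⟶ B) (h : B ⟶ A⟦(1 : ℤ)⟧), Triangle.mk f g h ∈ distTriang C

/-- `S^{≤ i} := S^{≤ 0}[-i]`. -/
def leN (le : Set C) (i : ℤ) : Set C := shSet le (-i)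

/-- `S^{≥ j} := S^{≥ 1}[-j+1]`. -/
def geN (S le : Set C) (j : ℤ) : Set C := shSet (S ∩ rOrth le) (1 - j)

/-- The heart `S^{≤ 0} ∩ S^{≥ 0}` of a t-structure on `S`. -/
def heartOn (S le : Set C) : Set C := leN le 0 ∩ geN S le 0

/-- Boundedness of a t-structure on `S`. -/
def IsBoundedOn (S le : Set C) : Prop := ∀ E ∈ S, ∃ i j : ℤ, E ∈ leN le i ∧ E ∈ geN S le j

/-- Non-degeneracy of a t-structure on `S`. -/
def IsNonDegenerateOn (S le : Set C) : Prop :=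
  (∀ E : C, (∀ i : ℤ, E ∈ leN le i) → IsZero E) ∧
  (∀ E : C, (∀ j : ℤ, E ∈ geN S le j) → IsZero E)

/-- A semiorthogonal decomposition `C = ⟨S₁, S₂⟩`. -/
structure IsSOD (S₁ S₂ : Set C) : Prop where
  sub₁ : IsTriangulatedSub S₁
  sub₂ : IsTriangulatedSub S₂
  orth : ∀ X ∈ S₂, ∀ Y ∈ S₁, ∀ f : X ⟶ Y, f = 0
  exists_triangle : ∀ E : C, ∃ (A B : C) (_ : A ∈ S₂) (_ : B ∈ S₁)
    (f : A ⟶ E) (g : E ⟶ B) (h : B ⟶ A⟦(1 : ℤ)⟧), Triangle.mk f g h ∈ distTriang C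

/-- Compatibility of t-structures `le₁` on `S₁` and `le₂` on `S₂` in `C`:
`Hom(S₁^{≤0}, S₂^{≥1}) = 0`. -/
def Compatible (S₂ le₁ le₂ : Set C) : Prop :=
  ∀ X ∈ le₁, ∀ Y ∈ S₂ ∩ rOrth le₂, ∀ f : X ⟶ Y, f = 0

/-- The glued aisle `T^{≤0} := T₂^{≤0} * (T₁^{≤0}[1])`. -/
def glued (le₁ le₂ : Set C) : Set C := star le₂ (shSet le₁ 1)

/-!
Since `T₂^{≤0}` and `T₁^{≤0}[1]` contain zero objects, the right orthogonal of the glued aisle is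
the intersection of theirs. Let `A ⟶ Y ⟶ B ⟶ A⟦1⟧` be the decomposition triangle of an object `Y`
of this intersection, with `A ∈ T₂` and `B ∈ T₁`. Semiorthogonality kills the maps from `T₂^{≤0}`
to `B⟦-1⟧`, so `A` is right orthogonal to `T₂^{≤0}` because `Y` is. Then `A ∈ T₂^{≥1}`, and
compatibility kills the maps from `T₁^{≤0}[1]` to `A⟦1⟧`, so `B` is right orthogonal to
`T₁^{≤0}[1]` because `Y` is. Conversely, semiorthogonality and compatibility put `T₂^{≥1}` and
`T₁^{≥1}[1]` in the intersection, which is closed under extensions.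
-/

section Orthogonal

variable {D : Type u} [Category.{v} D] [Preadditive D]

theorem mem_rOrth_iff {W : Set D} {Y : D} :
    Y ∈ rOrth W ↔ ObjectProperty.rightOrthogonal (· ∈ W) Y :=
  ⟨fun hY X f hX ↦ hY X hX f, fun hY _ hX f ↦ hY f hX⟩

theorem rOrth_anti {V W : Set D} (h : V ⊆ W) : rOrth W ⊆ rOrth V :=
  fun _ hY X hX ↦ hY X (h hX)

theorem rOrth_isoClosed {W : Set D} {X Y : D} (e : X ≅ Y) (hX : X ∈ rOrth W) : Y ∈ rOrth W :=
  mem_rOrth_iff.2 (ObjectProperty.prop_of_iso _ e (mem_rOrth_iff.1 hX))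

theorem Compatible.inter_rOrth_subset {S₂ le₁ le₂ : Set D} (h : Compatible S₂ le₁ le₂) :
    S₂ ∩ rOrth le₂ ⊆ rOrth le₁ :=
  fun Y hY _ hX ↦ h _ hX Y hY

end Orthogonal

section Shift

variable {D : Type u} [Category.{v} D] [HasShift D ℤ]

theorem mem_shSet_iff {S : Set D} (hS : ∀ {X Y : D}, (X ≅ Y) → X ∈ S → Y ∈ S) {n : ℤ} {Y : D} :
    Y ∈ shSet S n ↔ Y⟦-n⟧ ∈ S :=
  ⟨fun ⟨X, hX, ⟨e⟩⟩ ↦ hS ((shiftFunctor D (-n)).mapIso e ≪≫ shiftShiftNeg X n).symm hX,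
    fun hY ↦ ⟨_, hY, ⟨(shiftNegShift Y n).symm⟩⟩⟩

end Shift

section ShiftOrthogonal

variable {D : Type u} [Category.{v} D] [Preadditive D] [HasShift D ℤ]

theorem mem_rOrth_shSet_iff_forall {W : Set D} {n : ℤ} {Y : D} :
    Y ∈ rOrth (shSet W n) ↔ ∀ X ∈ W, ∀ f : X⟦n⟧ ⟶ Y, f = 0 :=
  ⟨fun hY X hX ↦ hY _ ⟨X, hX, ⟨Iso.refl _⟩⟩,
    fun hY _ ⟨X, hX, ⟨e⟩⟩ f ↦ by rw [← cancel_epi e.inv, hY X hX (e.inv ≫ f), comp_zero]⟩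

theorem rOrth_subset_rOrth_shSet {W : Set D} {n : ℤ} (hW : ∀ X ∈ W, X⟦n⟧ ∈ W) :
    rOrth W ⊆ rOrth (shSet W n) :=
  fun _ hY ↦ mem_rOrth_shSet_iff_forall.2 fun X hX ↦ hY _ (hW X hX)

end ShiftOrthogonal

section AdditiveShift

variable {D : Type u} [Category.{v} D] [Preadditive D] [HasShift D ℤ]
  [∀ n : ℤ, (shiftFunctor D n).Additive]

theorem shift_mem_rOrth_shSet_iff {W : Set D} {n : ℤ} {Y : D} :
    Y⟦n⟧ ∈ rOrth (shSet W n) ↔ Y ∈ rOrth W := by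
  rw [mem_rOrth_shSet_iff_forall]
  refine forall₂_congr fun X _ ↦ ?_
  rw [(shiftFunctor D n).map_surjective.forall]
  simp only [Functor.map_eq_zero_iff]

theorem rOrth_shSet (W : Set D) (n : ℤ) : rOrth (shSet W n) = shSet (rOrth W) n := by
  ext Y
  rw [mem_shSet_iff rOrth_isoClosed, ← shift_mem_rOrth_shSet_iff (W := W) (n := n)]
  exact ⟨rOrth_isoClosed (shiftNegShift Y n).symm, rOrth_isoClosed (shiftNegShift Y n)⟩

instance containsZero_shSet (S : Set D) [ObjectProperty.ContainsZero (· ∈ S)] (n : ℤ) :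
    ObjectProperty.ContainsZero (· ∈ shSet S n) := by
  obtain ⟨Z, hZ, hZS⟩ := ObjectProperty.exists_prop_of_containsZero (· ∈ S)
  exact ⟨Z⟦n⟧, (shiftFunctor D n).map_isZero hZ, Z, hZS, ⟨Iso.refl _⟩⟩

end AdditiveShift

theorem IsTriangulatedSub.shift_mem_iff {S : Set C} (hS : IsTriangulatedSub S) {n : ℤ} {X : C} :
    X⟦n⟧ ∈ S ↔ X ∈ S :=
  ⟨fun hX ↦ hS.isoClosed (shiftShiftNeg X n) (hS.shift (-n) _ hX), hS.shift n X⟩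

theorem IsTriangulatedSub.shSet_inter {S : Set C} (hS : IsTriangulatedSub S) (W : Set C) (n : ℤ) :
    shSet (S ∩ W) n = S ∩ shSet W n := by
  ext Y
  constructor
  · rintro ⟨X, ⟨hXS, hXW⟩, ⟨e⟩⟩
    exact ⟨hS.isoClosed e.symm (hS.shift n X hXS), X, hXW, ⟨e⟩⟩
  · rintro ⟨hYS, X, hXW, ⟨e⟩⟩
    exact ⟨X, ⟨hS.shift_mem_iff.1 (hS.isoClosed e hYS), hXW⟩, ⟨e⟩⟩

theorem obj₂_mem_rOrth {W : Set C} {T : Triangle C} (hT : T ∈ distTriang C)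
    (h₁ : T.obj₁ ∈ rOrth W) (h₃ : T.obj₃ ∈ rOrth W) : T.obj₂ ∈ rOrth W :=
  mem_rOrth_iff.2 (ObjectProperty.ext_of_isTriangulatedClosed₂ _ T hT
    (mem_rOrth_iff.1 h₁) (mem_rOrth_iff.1 h₃))

theorem obj₁_mem_rOrth {W : Set C} {T : Triangle C} (hT : T ∈ distTriang C)
    (h₂ : T.obj₂ ∈ rOrth W) (h₃ : T.obj₃⟦(-1 : ℤ)⟧ ∈ rOrth W) : T.obj₁ ∈ rOrth W :=
  obj₂_mem_rOrth (inv_rot_of_distTriang T hT) h₃ h₂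

theorem obj₃_mem_rOrth {W : Set C} {T : Triangle C} (hT : T ∈ distTriang C)
    (h₂ : T.obj₂ ∈ rOrth W) (h₁ : T.obj₁⟦(1 : ℤ)⟧ ∈ rOrth W) : T.obj₃ ∈ rOrth W :=
  obj₂_mem_rOrth (rot_of_distTriang T hT) h₂ h₁

theorem star_subset_rOrth {X Y W : Set C} (hX : X ⊆ rOrth W) (hY : Y ⊆ rOrth W) :
    star X Y ⊆ rOrth W := by
  rintro _ ⟨A, hA, B, hB, _, _, _, hT⟩
  exact obj₂_mem_rOrth hT (hX hA) (hY hB)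

theorem mem_star_iff {X Y : Set C} {Z : C} :
    Z ∈ star X Y ↔ ObjectProperty.extensionProduct (· ∈ X) (· ∈ Y) Z :=
  ⟨fun ⟨A, hA, B, hB, f, g, h, hT⟩ ↦ ⟨A, B, f, g, h, hT, hA, hB⟩,
    fun ⟨A, B, f, g, h, hT, hA, hB⟩ ↦ ⟨A, hA, B, hB, f, g, h, hT⟩⟩

theorem subset_star_left {X Y : Set C} [ObjectProperty.ContainsZero (· ∈ Y)] :
    X ⊆ star X Y :=
  fun A hA ↦ mem_star_iff.2 (ObjectProperty.le_extensionProduct_left _ A hA)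

theorem subset_star_right {X Y : Set C} [ObjectProperty.ContainsZero (· ∈ X)] :
    Y ⊆ star X Y :=
  fun B hB ↦ mem_star_iff.2 (ObjectProperty.le_extensionProduct_right _ B hB)

theorem rOrth_star (X Y : Set C) [ObjectProperty.ContainsZero (· ∈ X)]
    [ObjectProperty.ContainsZero (· ∈ Y)] : rOrth (star X Y) = rOrth X ∩ rOrth Y := by
  apply Set.Subset.antisymm
  · exact Set.subset_inter (rOrth_anti subset_star_left) (rOrth_anti subset_star_right)
  · rintro Z ⟨hZX, hZY⟩ _ ⟨A, hA, B, hB, f, g, h, hT⟩ φ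
    obtain ⟨ψ, rfl⟩ := Triangle.yoneda_exact₂ _ hT φ (hZX A hA _)
    rw [hZY B hB ψ]
    exact comp_zero

theorem IsTriangulatedSub.containsZero {S : Set C} (hS : IsTriangulatedSub S) :
    ObjectProperty.ContainsZero (· ∈ S) :=
  have ⟨Z, hZ⟩ := HasZeroObject.zero (C := C)
  ⟨Z, hZ, hS.zero Z hZ⟩

theorem IsTStructureOn.containsZero {S le : Set C} (h : IsTStructureOn S le)
    (hS : ObjectProperty.ContainsZero (· ∈ S)) : ObjectProperty.ContainsZero (· ∈ le) := by
  obtain ⟨Z, hZ, hZS⟩ := hS.exists_zero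
  obtain ⟨A, B, hA, hB, f, g, k, hT⟩ := h.exists_triangle Z hZS
  have hk : IsIso k := (Triangle.isZero₂_iff_isIso₃ _ hT).1 hZ
  have hinv : inv k = 0 := hB.2 _ (h.shift A hA) _
  refine ⟨A⟦(1 : ℤ)⟧, ?_, h.shift A hA⟩
  rw [IsZero.iff_id_eq_zero, ← IsIso.inv_hom_id k, hinv, zero_comp]

theorem IsSOD.subset_rOrth {S₁ S₂ : Set C} (h : IsSOD S₁ S₂) : S₁ ⊆ rOrth S₂ :=
  fun Y hY X hX ↦ h.orth X hX Y hY

theorem IsSOD.rOrth_inter_rOrth {S₁ S₂ W₁ W₂ : Set C} (h : IsSOD S₁ S₂) (hW₂ : W₂ ⊆ S₂)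
    (hW₁ : S₂ ∩ rOrth W₂ ⊆ rOrth W₁) (hW₁_shift : ∀ A ∈ S₂ ∩ rOrth W₂, A⟦(1 : ℤ)⟧ ∈ rOrth W₁) :
    rOrth W₂ ∩ rOrth W₁ = star (S₂ ∩ rOrth W₂) (S₁ ∩ rOrth W₁) := by
  have hS₁ : S₁ ⊆ rOrth W₂ := h.subset_rOrth.trans (rOrth_anti hW₂)
  apply Set.Subset.antisymm
  · rintro Y ⟨hY₂, hY₁⟩
    obtain ⟨A, B, hA, hB, f, g, k, hT⟩ := h.exists_triangle Y
    have hA₂ : A ∈ rOrth W₂ := obj₁_mem_rOrth hT hY₂ (hS₁ (h.sub₁.shift (-1) B hB))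
    have hB₁ : B ∈ rOrth W₁ := obj₃_mem_rOrth hT hY₁ (hW₁_shift A ⟨hA, hA₂⟩)
    exact ⟨A, ⟨hA, hA₂⟩, B, ⟨hB, hB₁⟩, f, g, k, hT⟩
  · apply Set.subset_inter
    · exact star_subset_rOrth Set.inter_subset_right (Set.inter_subset_left.trans hS₁)
    · exact star_subset_rOrth hW₁ Set.inter_subset_right

theorem glued_coaisle_general {S₁ S₂ le₁ le₂ : Set C} (hSOD : IsSOD S₁ S₂)
    [ObjectProperty.ContainsZero (· ∈ le₁)] [ObjectProperty.ContainsZero (· ∈ le₂)]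
    (hshift₁ : ∀ X ∈ le₁, X⟦(1 : ℤ)⟧ ∈ le₁) (hle₂ : le₂ ⊆ S₂) (hcomp : Compatible S₂ le₁ le₂) :
    rOrth (glued le₁ le₂) = star (S₂ ∩ rOrth le₂) (shSet (S₁ ∩ rOrth le₁) 1) := by
  have hcoaisle : S₂ ∩ rOrth le₂ ⊆ rOrth le₁ := hcomp.inter_rOrth_subset
  calc
    rOrth (glued le₁ le₂) = rOrth le₂ ∩ rOrth (shSet le₁ 1) := rOrth_star le₂ (shSet le₁ 1)
    _ = star (S₂ ∩ rOrth le₂) (S₁ ∩ rOrth (shSet le₁ 1)) :=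
      hSOD.rOrth_inter_rOrth hle₂ (hcoaisle.trans (rOrth_subset_rOrth_shSet hshift₁))
        fun _ hA ↦ shift_mem_rOrth_shSet_iff.2 (hcoaisle hA)
    _ = star (S₂ ∩ rOrth le₂) (shSet (S₁ ∩ rOrth le₁) 1) := by
      rw [rOrth_shSet, hSOD.sub₁.shSet_inter]

/-- the right orthogonal of the glued aisle `T₂^{≤0} * (T₁^{≤0}[1])`
is `T₂^{≥1} * (T₁^{≥1}[1])`. -/
theorem glued_coaisle {C : Type u} [Category.{v} C] [HasZeroObject C] [Preadditive C]
    [HasShift C ℤ] [∀ n : ℤ, (shiftFunctor C n).Additive] [Pretriangulated C]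
    (S₁ S₂ le₁ le₂ : Set C) (hSOD : IsSOD S₁ S₂)
    (h₁ : IsTStructureOn S₁ le₁) (h₂ : IsTStructureOn S₂ le₂)
    (hcomp : Compatible S₂ le₁ le₂) :
    rOrth (glued le₁ le₂) = star (S₂ ∩ rOrth le₂) (shSet (S₁ ∩ rOrth le₁) 1) := by
  have := h₁.containsZero hSOD.sub₁.containsZero
  have := h₂.containsZero hSOD.sub₂.containsZero
  exact glued_coaisle_general hSOD h₁.shift h₂.subset hcomp

end Paper
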